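/- Let λ be a partition and b, b' two distinct boxes each of which is either addable to or removable from λ, with c(b) ≡ c(b') mod n. Then b' ≻_{A^H} b if and only if either h(b') > h(b), or h(b') = h(b) and c(b') > c(b). -/

import Mathlib

/-!
Let `c(b') - c(b) = n t` with `t > 0`, and write `dx`, `dy` for the coordinate differences, so that
`dy - dx = n t`. Then `dy > ⌈n t / 2⌉ - 1` means `2 dy ≥ dy - dx`, that is `h(b') ≥ h(b)`
(`gt_AH_iff`). For boxes of different content this is the lexicographic order.

It remains to rule out two distinct boxes of equal content, which `SuccAH` never relates. No box
strictly to the right, in its row, of an addable or removable box lies in the diagram, while the box just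
above it, if there is one, does. If `(i, j)` and `(i + d, j + d)`, `d > 0`, were both addable
or removable, then `(i + d - 1, j + d)` would be in the diagram and hence so would `(i, j + 1)`,
a contradiction.
-/

/-- The content of a box with cell coordinates `(i, j)` (row `i`, column `j`, zero-indexed;
in the paper's half-integer coordinates the box is `(i + 1/2, j + 1/2)`). -/
def content (p : ℕ × ℕ) : ℤ := (p.2 : ℤ) - (p.1 : ℤ)

/-- The height `h(b) = x_b + y_b` of a box (in the paper's half-integer coordinates). -/
def height (p : ℕ × ℕ) : ℤ := (p.1 : ℤ) + (p.2 : ℤ) + 1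

/-- A box is addable if adding it yields a Young diagram. -/
def IsAddable (μ : YoungDiagram) (p : ℕ × ℕ) : Prop :=
  p ∉ μ ∧ ∃ ν : YoungDiagram, ν.cells = insert p μ.cells

/-- A box is removable if deleting it yields a Young diagram. -/
def IsRemovable (μ : YoungDiagram) (p : ℕ × ℕ) : Prop :=
  p ∈ μ ∧ ∃ ν : YoungDiagram, ν.cells = μ.cells.erase p

/-- The arm sequence `A^H_t = ⌈n t / 2⌉ - 1`. -/
def AH (n : ℕ) (t : ℤ) : ℤ := ⌈((n : ℚ) * (t : ℚ)) / 2⌉ - 1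

/-- The arm length of a box in a Young diagram. -/
def armLen (μ : YoungDiagram) (p : ℕ × ℕ) : ℤ := (μ.rowLen p.1 : ℤ) - (p.2 : ℤ) - 1

/-- The hook length of a box in a Young diagram. -/
def hookLen (μ : YoungDiagram) (p : ℕ × ℕ) : ℤ :=
  (μ.rowLen p.1 : ℤ) - (p.2 : ℤ) + (μ.colLen p.2 : ℤ) - (p.1 : ℤ) - 1

/-- A box of `μ` is `A^H`-illegal if `hook = n t` and `arm = A^H_t` for some `t ≥ 1`. -/
def IllegalAH (n : ℕ) (μ : YoungDiagram) (p : ℕ × ℕ) : Prop :=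
  p ∈ μ ∧ ∃ t : ℤ, 1 ≤ t ∧ hookLen μ p = (n : ℤ) * t ∧ armLen μ p = AH n t

/-- A partition is `A^H`-regular if it has no `A^H`-illegal boxes. -/
def RegularAH (n : ℕ) (μ : YoungDiagram) : Prop := ∀ p, ¬ IllegalAH n μ p

/-- The order `≻_{A^H}` on boxes whose contents are congruent mod `n` (and distinct):
`b' ≻ b` iff (for `c(b') - c(b) = n t`, `t > 0`) `y_{b'} - y_b > A^H_t`, and
(for `c(b) - c(b') = n t`, `t > 0`) the negation of the corresponding condition. -/
def SuccAH (n : ℕ) (b' b : ℕ × ℕ) : Prop :=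
  (∃ t : ℤ, 0 < t ∧ content b' - content b = (n : ℤ) * t ∧ (b'.2 : ℤ) - (b.2 : ℤ) > AH n t) ∨
  (∃ t : ℤ, 0 < t ∧ content b - content b' = (n : ℤ) * t ∧ ¬ ((b.2 : ℤ) - (b'.2 : ℤ) > AH n t))

open Classical in
/-- The finite set of addable boxes of a Young diagram. -/
noncomputable def addables (μ : YoungDiagram) : Finset (ℕ × ℕ) :=
  ((Finset.range (μ.colLen 0 + 1)) ×ˢ (Finset.range (μ.rowLen 0 + 1))).filter (IsAddable μ)

open Classical in
/-- The finite set of removable boxes of a Young diagram. -/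
noncomputable def removables (μ : YoungDiagram) : Finset (ℕ × ℕ) :=
  μ.cells.filter (IsRemovable μ)

/-- Addable boxes of color `i`. -/
noncomputable def addablesC (n : ℕ) (i : ZMod n) (μ : YoungDiagram) : Finset (ℕ × ℕ) :=
  (addables μ).filter (fun b => ((content b : ZMod n) = i))

/-- Removable boxes of color `i`. -/
noncomputable def removablesC (n : ℕ) (i : ZMod n) (μ : YoungDiagram) : Finset (ℕ × ℕ) :=
  (removables μ).filter (fun b => ((content b : ZMod n) = i))

theorem gt_AH_iff (n : ℕ) (t y : ℤ) : y > AH n t ↔ (n : ℤ) * t ≤ 2 * y := by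
  have h : ⌈((n : ℚ) * (t : ℚ)) / 2⌉ ≤ y ↔ (n : ℤ) * t ≤ 2 * y := by
    rw [Int.ceil_le, div_le_iff₀ (by norm_num), mul_comm (y : ℚ) 2]
    exact_mod_cast Iff.rfl
  rw [← h]
  unfold AH
  omega

theorem right_notMem {μ : YoungDiagram} {b : ℕ × ℕ} (hb : IsAddable μ b ∨ IsRemovable μ b) :
    (b.1, b.2 + 1) ∉ μ := by
  intro h
  have hle : b ≤ (b.1, b.2 + 1) := ⟨le_rfl, Nat.le_succ _⟩
  rcases hb with ⟨hb, -⟩ | ⟨-, ν, hν⟩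
  · exact hb (μ.isLowerSet hle h)
  · have h1 : (b.1, b.2 + 1) ∈ ν.cells := by
      rw [hν, Finset.mem_erase]
      refine ⟨fun e => ?_, h⟩
      have := congrArg Prod.snd e
      simp at this
    have h2 : b ∈ ν.cells := ν.isLowerSet hle h1
    simp [hν] at h2

theorem pred_mem {μ : YoungDiagram} {b : ℕ × ℕ} (hb : IsAddable μ b ∨ IsRemovable μ b)
    {k : ℕ} (hk : b.1 = k + 1) : (k, b.2) ∈ μ := by
  have hle : (k, b.2) ≤ b := ⟨by simp [hk], le_rfl⟩
  rcases hb with ⟨-, ν, hν⟩ | ⟨hb, -⟩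
  · have h1 : b ∈ ν.cells := by simp [hν]
    have h2 : (k, b.2) ∈ ν.cells := ν.isLowerSet hle h1
    rw [hν, Finset.mem_insert] at h2
    rcases h2 with h2 | h2
    · have := congrArg Prod.fst h2
      simp only at this
      omega
    · exact h2
  · exact μ.isLowerSet hle hb

/-- Of two addable or removable boxes, neither lies strictly beyond the other in both
coordinates. -/
theorem not_lt_lt {μ : YoungDiagram} {b b' : ℕ × ℕ} (hb : IsAddable μ b ∨ IsRemovable μ b)
    (hb' : IsAddable μ b' ∨ IsRemovable μ b') (h1 : b.1 < b'.1) (h2 : b.2 < b'.2) : False := by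
  have h := pred_mem hb' (k := b'.1 - 1) (by omega)
  have hle : (b.1, b.2 + 1) ≤ (b'.1 - 1, b'.2) := ⟨by simp only; omega, by simp only; omega⟩
  exact right_notMem hb (μ.isLowerSet hle h)

theorem content_ne {μ : YoungDiagram} {b b' : ℕ × ℕ} (hne : b ≠ b')
    (hb : IsAddable μ b ∨ IsRemovable μ b) (hb' : IsAddable μ b' ∨ IsRemovable μ b') :
    content b ≠ content b' := by
  intro h
  unfold content at h
  rcases lt_trichotomy b.1 b'.1 with h1 | h1 | h1
  · exact not_lt_lt hb hb' h1 (by omega)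
  · exact hne (Prod.ext h1 (by omega))
  · exact not_lt_lt hb' hb h1 (by omega)

/-- Lemma 4.2 (flat-order): for a partition and distinct boxes `b`, `b'`, each addable to or
removable from it, with contents congruent mod `n`: `b' ≻_{A^H} b` iff `h(b') > h(b)`, or
`h(b') = h(b)` and `c(b') > c(b)`. -/
theorem succAH_iff_lex (n : ℕ) (hn : 3 ≤ n) (μ : YoungDiagram) (b b' : ℕ × ℕ)
    (hne : b ≠ b')
    (hb : IsAddable μ b ∨ IsRemovable μ b)
    (hb' : IsAddable μ b' ∨ IsRemovable μ b')
    (hcong : (n : ℤ) ∣ (content b' - content b)) :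
    SuccAH n b' b ↔
      (height b < height b' ∨ (height b' = height b ∧ content b < content b')) := by
  have hc := content_ne hne hb hb'
  obtain ⟨s, hs⟩ := hcong
  have hn0 : (0 : ℤ) < n := by omega
  unfold SuccAH
  simp only [gt_AH_iff]
  rcases lt_trichotomy s 0 with h0 | h0 | h0
  · have hneg : (n : ℤ) * s < 0 := mul_neg_of_pos_of_neg hn0 h0
    constructor
    · rintro (⟨t, ht, h1, h2⟩ | ⟨t, ht, h1, h2⟩)
      · have := mul_pos hn0 ht
        linarith
      · unfold content height at *
        omega
    · intro h
      refine Or.inr ⟨-s, by omega, by rw [mul_neg]; omega, ?_⟩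
      rw [mul_neg]
      unfold content height at *
      omega
  · subst h0
    rw [mul_zero] at hs
    exact absurd (sub_eq_zero.mp hs).symm hc
  · have hpos : 0 < (n : ℤ) * s := mul_pos hn0 h0
    constructor
    · rintro (⟨t, ht, h1, h2⟩ | ⟨t, ht, h1, h2⟩)
      · unfold content height at *
        omega
      · have := mul_pos hn0 ht
        linarith
    · intro h
      refine Or.inl ⟨s, h0, hs, ?_⟩
      unfold content height at *
      omega
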